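/- The free algebra on two generators in the quasivariety generated by K₃ has exactly 3059 elements; equivalently, the quotient of the set of {∧, ∨, °, 0, 1}-terms in two fixed variables by the equivalence relation 't ~ s iff t and s evaluate to the same element of K₃ under every assignment of the two variables into K₃' has exactly 3059 equivalence classes. -/

import Mathlib

/-!
The terms modulo `~` are counted by Priestley-style duality. The prime filters of the lattice
reduct of K₃ are the principal filters of `b`, `c`, `d`; paired with the 25 assignments they give
75 points, and a term is determined up to `~` by the set of points at which it holds
(`K3.ext_mem`).

By the De Morgan laws and `x°°° = x°`, every term is equivalent to a lattice term in the six
literals `x, y, x°, y°, x°°, y°°`. Preorder the points by inclusion of the sets of literals that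
hold there. Each term then defines an up-set (`Pt.Holds.mono`), and each up-set is defined by a
join of meets of literals (`exists_term_iff_mem`). So the quotient is in bijection with the up-sets
of this preorder.

Up-sets are counted by the recursion (`card_upsets_eq_add`)
`N(P) = N(P \ ↓p) + N(P \ ↑p)`, for `p ∈ P`: the first summand counts the up-sets avoiding `p`,
the second those containing it. The recursion tree has exactly one leaf per up-set, so the kernel
evaluates it directly.
-/

/-- Terms in the language {∧, ∨, °, 0, 1} over a set `V` of variables. -/
inductive MSTerm (V : Type) : Type
  | var : V → MSTerm V
  | meet : MSTerm V → MSTerm V → MSTerm V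
  | join : MSTerm V → MSTerm V → MSTerm V
  | star : MSTerm V → MSTerm V
  | zero : MSTerm V
  | one : MSTerm V

/-- An algebra in the language {∧, ∨, °, 0, 1}. -/
structure MSAlg where
  carrier : Type
  meet : carrier → carrier → carrier
  join : carrier → carrier → carrier
  star : carrier → carrier
  zero : carrier
  one : carrier

/-- Evaluation of a term in an algebra under an assignment of the variables. -/
def MSTerm.eval {V : Type} (A : MSAlg) (v : V → A.carrier) : MSTerm V → A.carrier
  | .var x => v x
  | .meet t s => A.meet (t.eval A v) (s.eval A v)
  | .join t s => A.join (t.eval A v) (s.eval A v)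
  | .star t => A.star (t.eval A v)
  | .zero => A.zero
  | .one => A.one

/-- Substitution of terms for variables. -/
def MSTerm.subst {V W : Type} (s : V → MSTerm W) : MSTerm V → MSTerm W
  | .var x => s x
  | .meet t u => .meet (t.subst s) (u.subst s)
  | .join t u => .join (t.subst s) (u.subst s)
  | .star t => .star (t.subst s)
  | .zero => .zero
  | .one => .one

/-- Validity of the identity `φ ≈ ψ` in the algebra `A`. -/
def MSIdValid {V : Type} (A : MSAlg) (φ ψ : MSTerm V) : Prop :=
  ∀ v : V → A.carrier, φ.eval A v = ψ.eval A v

/-- Validity of the quasi-identity `Γ ⇒ φ ≈ ψ` in the algebra `A`. -/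
def MSQValid (A : MSAlg) (Γ : List (MSTerm ℕ × MSTerm ℕ)) (φ ψ : MSTerm ℕ) : Prop :=
  ∀ v : ℕ → A.carrier,
    (∀ p ∈ Γ, p.1.eval A v = p.2.eval A v) → φ.eval A v = ψ.eval A v

/-- Admissibility of the quasi-identity `Γ ⇒ φ ≈ ψ` in the algebra `M`. -/
def MSAdmissible (M : MSAlg) (Γ : List (MSTerm ℕ × MSTerm ℕ)) (φ ψ : MSTerm ℕ) : Prop :=
  ∀ s : ℕ → MSTerm ℕ,
    (∀ p ∈ Γ, MSIdValid M (p.1.subst s) (p.2.subst s)) →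
    MSIdValid M (φ.subst s) (ψ.subst s)

/-- `A` is an MS-algebra: a bounded distributive lattice with a unary `°`
satisfying x ≤ x°°, (x ∧ y)° = x° ∨ y°, and 1° = 0. -/
def IsMSAlg (A : MSAlg) : Prop :=
  (∀ x y, A.meet x y = A.meet y x) ∧
  (∀ x y, A.join x y = A.join y x) ∧
  (∀ x y z, A.meet (A.meet x y) z = A.meet x (A.meet y z)) ∧
  (∀ x y z, A.join (A.join x y) z = A.join x (A.join y z)) ∧
  (∀ x y, A.meet x (A.join x y) = x) ∧
  (∀ x y, A.join x (A.meet x y) = x) ∧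
  (∀ x y z, A.meet x (A.join y z) = A.join (A.meet x y) (A.meet x z)) ∧
  (∀ x, A.join x A.zero = x) ∧
  (∀ x, A.meet x A.one = x) ∧
  (∀ x, A.meet x (A.star (A.star x)) = x) ∧
  (∀ x y, A.star (A.meet x y) = A.join (A.star x) (A.star y)) ∧
  A.star A.one = A.zero

/-- The Dershowitz–Manna multiset ordering (induced by the usual order on `ℕ`). -/
def MultisetLE (N N' : Multiset ℕ) : Prop :=
  ∀ x : ℕ, N'.count x < N.count x → ∃ y : ℕ, x < y ∧ N.count y < N'.count y

/-- K₃: the five-element MS-algebra on {0, b, c, d, 1}: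
0 < b, b < c, b < d, c < 1, d < 1, with c, d incomparable. -/
inductive K3 : Type
  | z  -- 0
  | b
  | c
  | d
  | u  -- 1
deriving DecidableEq

def K3.meet : K3 → K3 → K3
  | .z, _ => .z
  | _, .z => .z
  | .u, y => y
  | x, .u => x
  | .b, _ => .b
  | _, .b => .b
  | .c, .c => .c
  | .c, .d => .b
  | .d, .c => .b
  | .d, .d => .d

def K3.join : K3 → K3 → K3
  | .u, _ => .u
  | _, .u => .u
  | .z, y => y
  | x, .z => x
  | .b, y => y
  | x, .b => x
  | .c, .c => .c
  | .c, .d => .u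
  | .d, .c => .u
  | .d, .d => .d

/-- °0 = 1, °b = d, °c = 0, °d = d, °1 = 0. -/
def K3.star : K3 → K3
  | .z => .u
  | .b => .d
  | .c => .z
  | .d => .d
  | .u => .z

def K3alg : MSAlg := ⟨K3, K3.meet, K3.join, K3.star, K3.z, K3.u⟩

/-- Two terms in two variables are equivalent iff they evaluate to the same
element of K₃ under every assignment of the two variables into K₃. -/
def freeK32Setoid : Setoid (MSTerm (Fin 2)) where
  r t s := ∀ v : Fin 2 → K3, t.eval K3alg v = s.eval K3alg v
  iseqv := ⟨fun _ _ => rfl, fun h v => (h v).symm, fun h1 h2 v => (h1 v).trans (h2 v)⟩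

/-! ### Counting up-sets of a finite preorder -/

section Count

variable {α : Type} [DecidableEq α]

/-- The subsets of `P` that are upward closed within `P` for the relation `r`. -/
def upsets (r : α → α → Bool) (P : Finset α) : Finset (Finset α) :=
  P.powerset.filter fun U => ∀ x ∈ U, ∀ y ∈ P, r x y → y ∈ U

theorem mem_upsets {r : α → α → Bool} {P U : Finset α} :
    U ∈ upsets r P ↔ U ⊆ P ∧ ∀ x ∈ U, ∀ y ∈ P, r x y → y ∈ U := by
  simp [upsets]

/-- Up-sets of `P` split into those avoiding `p`, which are the up-sets of `P \ ↓p`, and those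
containing `p`, which are the sets `V ∪ ↑p` for `V` an up-set of `P \ ↑p`. -/
theorem card_upsets_eq_add (r : α → α → Bool) (hrefl : ∀ x, r x x)
    (htrans : ∀ x y z, r x y → r y z → r x z) (P : Finset α) (p : α) (hp : p ∈ P) :
    (upsets r P).card =
      (upsets r (P.filter fun q => !r q p)).card + (upsets r (P.filter fun q => !r p q)).card := by
  rw [← Finset.card_filter_add_card_filter_not (s := upsets r P) (fun U => p ∉ U)]
  congr 1
  · congr 1
    ext U
    simp only [Finset.mem_filter, mem_upsets, Finset.subset_iff, Bool.not_eq_true']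
    constructor
    · rintro ⟨⟨h1, h2⟩, h3⟩
      refine ⟨fun x hx => ⟨h1 hx, ?_⟩, fun x hx y hy hxy => h2 x hx y hy.1 hxy⟩
      by_contra h
      exact h3 (h2 x hx p hp (by simpa using h))
    · rintro ⟨h1, h2⟩
      refine ⟨⟨fun x hx => (h1 hx).1, fun x hx y hy hxy => h2 x hx y ⟨hy, ?_⟩ hxy⟩, ?_⟩
      · by_contra h
        have := htrans x y p hxy (by simpa using h)
        simp [(h1 hx).2] at this
      · intro h
        have := (h1 h).2
        simp [hrefl p] at this
  · refine Finset.card_nbij' (fun U => U.filter fun q => !r p q)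
      (fun V => V ∪ P.filter fun q => r p q) ?_ ?_ ?_ ?_
    · intro U hU
      simp only [Finset.coe_filter, Set.mem_ofPred_eq, mem_upsets, not_not, Finset.subset_iff,
        Finset.mem_coe, Finset.mem_filter] at hU ⊢
      obtain ⟨⟨h1, h2⟩, h3⟩ := hU
      exact ⟨fun x hx => ⟨h1 hx.1, hx.2⟩, fun x hx y hy hxy => ⟨h2 x hx.1 y hy.1 hxy, hy.2⟩⟩
    · intro V hV
      simp only [Finset.coe_filter, Set.mem_ofPred_eq, mem_upsets, not_not, Finset.subset_iff,
        Finset.mem_coe, Finset.mem_filter, Finset.mem_union] at hV ⊢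
      obtain ⟨h1, h2⟩ := hV
      refine ⟨⟨?_, ?_⟩, Or.inr ⟨hp, hrefl p⟩⟩
      · rintro x (hx | hx)
        · exact (h1 hx).1
        · exact hx.1
      · rintro x (hx | hx) y hy hxy
        · by_cases hpy : r p y
          · exact Or.inr ⟨hy, hpy⟩
          · exact Or.inl (h2 x hx y ⟨hy, by simpa using hpy⟩ hxy)
        · exact Or.inr ⟨hy, htrans _ _ _ hx.2 hxy⟩
    · intro U hU
      simp only [Finset.coe_filter, Set.mem_ofPred_eq, mem_upsets, not_not] at hU
      obtain ⟨⟨h1, h2⟩, h3⟩ := hU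
      ext x
      simp only [Finset.mem_union, Finset.mem_filter, Bool.not_eq_true']
      constructor
      · rintro (hx | hx)
        · exact hx.1
        · exact h2 p h3 x hx.1 hx.2
      · intro hx
        by_cases hpx : r p x
        · exact Or.inr ⟨h1 hx, hpx⟩
        · exact Or.inl ⟨hx, by simpa using hpx⟩
    · intro V hV
      simp only [Finset.mem_coe, mem_upsets] at hV
      obtain ⟨h1, h2⟩ := hV
      ext x
      simp only [Finset.mem_union, Finset.mem_filter, Bool.not_eq_true']
      constructor
      · rintro ⟨hx | hx, h⟩
        · exact hx
        · simp [hx.2] at h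
      · intro hx
        exact ⟨Or.inl hx, by simpa using (Finset.mem_filter.mp (h1 hx)).2⟩

end Count

/-- The number of up-sets of the preorder `r` on the members of a list, by the recursion
`N(P) = N(P \ ↓p) + N(P \ ↑p)`. The first argument is a bound on the recursion depth, which
makes the recursion structural; the value is meaningful when the list is no longer than it. -/
def countUpsets {α : Type} (r : α → α → Bool) : ℕ → List α → ℕ
  | 0, _ => 1
  | _ + 1, [] => 1
  | n + 1, p :: l =>
    countUpsets r n (l.filter fun q => !r q p) + countUpsets r n (l.filter fun q => !r p q)

theorem card_upsets_toFinset {α : Type} [DecidableEq α] (r : α → α → Bool) (hrefl : ∀ x, r x x)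
    (htrans : ∀ x y z, r x y → r y z → r x z) (n : ℕ) (l : List α) (hl : l.length ≤ n) :
    (upsets r l.toFinset).card = countUpsets r n l := by
  have h0 : (upsets r (∅ : Finset α)).card = 1 := by
    rw [Finset.card_eq_one]
    refine ⟨∅, ?_⟩
    ext U
    simp +contextual [mem_upsets]
  induction n generalizing l with
  | zero =>
    obtain rfl : l = [] := by simpa using hl
    simpa [countUpsets] using h0
  | succ n ih =>
    cases l with
    | nil => simpa [countUpsets] using h0
    | cons p l =>
      have hl' : l.length ≤ n := by simpa using hl
      rw [countUpsets, card_upsets_eq_add r hrefl htrans _ p (by simp),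
        ← ih _ ((List.length_filter_le _ _).trans hl'),
        ← ih _ ((List.length_filter_le _ _).trans hl')]
      -- Reflexivity of `r` discards `p` itself from both filtered sets.
      congr 3
      · ext q
        simp only [Finset.mem_filter, List.mem_toFinset, List.mem_cons, List.mem_filter]
        constructor
        · rintro ⟨rfl | h, h'⟩
          · simp [hrefl q] at h'
          · exact ⟨h, h'⟩
        · exact fun h => ⟨Or.inr h.1, h.2⟩
      · ext q
        simp only [Finset.mem_filter, List.mem_toFinset, List.mem_cons, List.mem_filter]
        constructor
        · rintro ⟨rfl | h, h'⟩
          · simp [hrefl q] at h'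
          · exact ⟨h, h'⟩
        · exact fun h => ⟨Or.inr h.1, h.2⟩

theorem countUpsets_map {α β : Type} (f : α → β) (r : β → β → Bool) (n : ℕ) (l : List α) :
    countUpsets r n (l.map f) = countUpsets (fun x y => r (f x) (f y)) n l := by
  induction n generalizing l with
  | zero => rfl
  | succ n ih =>
    cases l with
    | nil => rfl
    | cons p l => simp only [List.map_cons, countUpsets, List.filter_map, ih]; rfl

/-! ### Prime filters of K₃ -/

instance : Fintype K3 := ⟨{.z, .b, .c, .d, .u}, fun x => by cases x <;> decide⟩

/-- Membership of `a` in one of the three prime filters of the lattice reduct of K₃, the principal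
filters of its join-irreducible elements `b`, `c` and `d`. -/
def K3.mem (f : Fin 3) (a : K3) : Bool :=
  K3.meet (![K3.b, K3.c, K3.d] f) a = ![K3.b, K3.c, K3.d] f

theorem K3.mem_meet : ∀ f x y, K3.mem f (K3.meet x y) = (K3.mem f x && K3.mem f y) := by decide

theorem K3.mem_join : ∀ f x y, K3.mem f (K3.join x y) = (K3.mem f x || K3.mem f y) := by decide

theorem K3.mem_zero : ∀ f, K3.mem f K3.z = false := by decide

theorem K3.mem_one : ∀ f, K3.mem f K3.u = true := by decide

theorem K3.ext_mem : ∀ x y, (∀ f, K3.mem f x = K3.mem f y) → x = y := by decide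

theorem K3.star_meet : ∀ x y, K3.star (K3.meet x y) = K3.join (K3.star x) (K3.star y) := by decide

theorem K3.star_join : ∀ x y, K3.star (K3.join x y) = K3.meet (K3.star x) (K3.star y) := by decide

theorem K3.star_star_star : ∀ a, K3.star (K3.star (K3.star a)) = K3.star a := by decide

/-! ### Points, literals and the up-sets defined by terms -/

/-- A point: the values of the two variables, and a prime filter of K₃. -/
abbrev Pt := K3 × K3 × Fin 3

/-- The assignment of a point. -/
def Pt.val (x : Pt) : Fin 2 → K3 := ![x.1, x.2.1]

/-- The term `t` holds at a point if its value there lies in the prime filter. -/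
def Pt.Holds (x : Pt) (t : MSTerm (Fin 2)) : Prop :=
  K3.mem x.2.2 (t.eval K3alg x.val) = true

/-- The six literals `x, y, x°, y°, x°°, y°°`. -/
def literals : List (MSTerm (Fin 2)) :=
  [.var 0, .var 1, .star (.var 0), .star (.var 1),
    .star (.star (.var 0)), .star (.star (.var 1))]

/-- The truth values of the six literals at a point, packed into the bits of a natural number. -/
def Pt.code (x : Pt) : ℕ :=
  literals.foldl
    (fun n t => 2 * n + (K3.mem x.2.2 (t.eval K3alg x.val)).toNat) 0

/-- Inclusion of sets of bits. -/
def bitLE (m n : ℕ) : Bool := Nat.beq (m &&& n) m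

/-- The preorder on points: every literal that holds at `x` holds at `y`. -/
def Pt.le (x y : Pt) : Bool := bitLE x.code y.code

theorem Pt.le_iff (x y : Pt) : x.le y ↔ ∀ t ∈ literals, x.Holds t → y.Holds t := by
  have key : ∀ a b c d e f a' b' c' d' e' f' : Bool,
      bitLE (2 * (2 * (2 * (2 * (2 * (2 * 0 + a.toNat) + b.toNat) + c.toNat) + d.toNat) + e.toNat)
          + f.toNat)
        (2 * (2 * (2 * (2 * (2 * (2 * 0 + a'.toNat) + b'.toNat) + c'.toNat) + d'.toNat) + e'.toNat)
          + f'.toNat) =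
      ((!a || a') && (!b || b') && (!c || c') && (!d || d') && (!e || e') && (!f || f')) := by
    decide +kernel
  simp only [Pt.le, Pt.code, literals, List.foldl_cons, List.foldl_nil, key, Pt.Holds,
    List.forall_mem_cons, List.not_mem_nil, false_implies, implies_true, and_true]
  simp only [Bool.and_eq_true, Bool.or_eq_true, Bool.not_eq_true', ← imp_iff_not_or, and_assoc,
    ← Bool.not_eq_true]

theorem Pt.le_refl (x : Pt) : x.le x := by simp [Pt.le_iff]

theorem Pt.le_trans (x y z : Pt) (h1 : x.le y) (h2 : y.le z) : x.le z := by
  rw [Pt.le_iff] at *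
  exact fun t ht h => h2 t ht (h1 t ht h)

theorem Pt.holds_meet (x : Pt) (t s : MSTerm (Fin 2)) :
    x.Holds (.meet t s) ↔ x.Holds t ∧ x.Holds s := by
  simp [Pt.Holds, MSTerm.eval, K3alg, K3.mem_meet]

theorem Pt.holds_join (x : Pt) (t s : MSTerm (Fin 2)) :
    x.Holds (.join t s) ↔ x.Holds t ∨ x.Holds s := by
  simp [Pt.Holds, MSTerm.eval, K3alg, K3.mem_join]

theorem Pt.holds_one (x : Pt) : x.Holds .one := K3.mem_one _

theorem Pt.not_holds_zero (x : Pt) : ¬ x.Holds .zero := by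
  simp [Pt.Holds, MSTerm.eval, K3alg, K3.mem_zero]

/-- Terms define up-sets. Since `°` reverses the order, the induction carries the claim for `t°`
and `t°°` along with that for `t`. -/
theorem Pt.Holds.mono_aux {x y : Pt} (hxy : x.le y) (t : MSTerm (Fin 2)) :
    (x.Holds t → y.Holds t) ∧ (x.Holds (.star t) → y.Holds (.star t)) ∧
      (x.Holds (.star (.star t)) → y.Holds (.star (.star t))) := by
  induction t with
  | var i =>
    rw [Pt.le_iff] at hxy
    fin_cases i <;> exact ⟨hxy _ (by simp [literals]), hxy _ (by simp [literals]),
      hxy _ (by simp [literals])⟩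
  | meet t s iht ihs =>
    simp only [Pt.Holds, MSTerm.eval, K3alg, K3.star_meet, K3.star_join, K3.mem_meet, K3.mem_join,
      Bool.and_eq_true, Bool.or_eq_true] at iht ihs ⊢
    exact ⟨And.imp iht.1 ihs.1, Or.imp iht.2.1 ihs.2.1, And.imp iht.2.2 ihs.2.2⟩
  | join t s iht ihs =>
    simp only [Pt.Holds, MSTerm.eval, K3alg, K3.star_meet, K3.star_join, K3.mem_meet, K3.mem_join,
      Bool.and_eq_true, Bool.or_eq_true] at iht ihs ⊢
    exact ⟨Or.imp iht.1 ihs.1, And.imp iht.2.1 ihs.2.1, Or.imp iht.2.2 ihs.2.2⟩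
  | star t ih =>
    have h3 : ∀ z : Pt, z.Holds (.star (.star (.star t))) ↔ z.Holds (.star t) := fun z => by
      simp only [Pt.Holds, MSTerm.eval, K3alg, K3.star_star_star]
    exact ⟨ih.2.1, ih.2.2, by simpa only [h3] using ih.2.1⟩
  | zero => simp [Pt.Holds, MSTerm.eval, K3alg, K3.star, K3.mem_zero, K3.mem_one]
  | one => simp [Pt.Holds, MSTerm.eval, K3alg, K3.star, K3.mem_zero, K3.mem_one]

theorem Pt.Holds.mono {x y : Pt} {t : MSTerm (Fin 2)} (h : x.Holds t) (hxy : x.le y) :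
    y.Holds t :=
  (Pt.Holds.mono_aux hxy t).1 h

/-- Principal up-sets are defined by meets of literals. -/
theorem exists_term_iff_le (a : Pt) : ∃ t, ∀ x : Pt, x.Holds t ↔ a.le x := by
  have h : ∀ L : List (MSTerm (Fin 2)),
      ∃ t, ∀ x : Pt, x.Holds t ↔ ∀ s ∈ L, a.Holds s → x.Holds s := by
    intro L
    induction L with
    | nil => exact ⟨.one, fun x => by simp [Pt.holds_one]⟩
    | cons s L ih =>
      obtain ⟨t, ht⟩ := ih
      by_cases hs : a.Holds s
      · exact ⟨.meet s t, fun x => by simp [Pt.holds_meet, ht, hs]⟩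
      · exact ⟨t, fun x => by simp [ht, hs]⟩
  simpa only [Pt.le_iff] using h literals

/-- Every up-set is defined by a term, as a finite join of principal up-sets. -/
theorem exists_term_iff_mem (U : Finset Pt) (hU : U ∈ upsets Pt.le Finset.univ) :
    ∃ t, ∀ x : Pt, x.Holds t ↔ x ∈ U := by
  have h : ∀ A : Finset Pt, ∃ t, ∀ x : Pt, x.Holds t ↔ ∃ a ∈ A, a.le x := by
    intro A
    induction A using Finset.induction with
    | empty => exact ⟨.zero, fun x => by simp [Pt.not_holds_zero]⟩
    | insert a A _ ih =>
      obtain ⟨t, ht⟩ := ih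
      obtain ⟨s, hs⟩ := exists_term_iff_le a
      exact ⟨.join s t, fun x => by simp [Pt.holds_join, ht, hs]⟩
  obtain ⟨t, ht⟩ := h U
  refine ⟨t, fun x => (ht x).trans ⟨?_, fun hx => ⟨x, hx, x.le_refl⟩⟩⟩
  rintro ⟨a, ha, hax⟩
  exact (mem_upsets.mp hU).2 a ha x (Finset.mem_univ x) hax

/-! ### The free algebra as the lattice of up-sets -/

/-- The set of points at which a term holds. -/
def truthSet (t : MSTerm (Fin 2)) : Finset Pt :=
  Finset.univ.filter fun x => K3.mem x.2.2 (t.eval K3alg x.val) = true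

theorem mem_truthSet {t : MSTerm (Fin 2)} {x : Pt} : x ∈ truthSet t ↔ x.Holds t := by
  simp [truthSet, Pt.Holds]

theorem truthSet_mem_upsets (t : MSTerm (Fin 2)) : truthSet t ∈ upsets Pt.le Finset.univ := by
  rw [mem_upsets]
  refine ⟨Finset.subset_univ _, fun x hx y _ hxy => ?_⟩
  rw [mem_truthSet] at *
  exact hx.mono hxy

theorem truthSet_eq_iff (t s : MSTerm (Fin 2)) :
    truthSet t = truthSet s ↔ ∀ v : Fin 2 → K3, t.eval K3alg v = s.eval K3alg v := by
  constructor
  · intro h v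
    apply K3.ext_mem
    intro f
    have hx := Finset.ext_iff.mp h (v 0, v 1, f)
    have hv : Pt.val (v 0, v 1, f) = v := by ext i; fin_cases i <;> rfl
    simp only [mem_truthSet, Pt.Holds, hv] at hx
    exact Bool.eq_iff_iff.mpr hx
  · intro h
    ext x
    simp only [mem_truthSet, Pt.Holds, h x.val]

/-- The free algebra on two generators is in bijection with the up-sets of the preorder of
points. -/
theorem card_quotient_eq_card_upsets :
    Nat.card (Quotient freeK32Setoid) = (upsets Pt.le Finset.univ).card := by
  let F : Quotient freeK32Setoid → {U // U ∈ upsets Pt.le Finset.univ} :=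
    Quotient.lift (fun t => ⟨truthSet t, truthSet_mem_upsets t⟩)
      fun t s h => Subtype.ext ((truthSet_eq_iff t s).mpr h)
  have hF : Function.Bijective F := by
    constructor
    · intro q₁ q₂
      induction q₁ using Quotient.inductionOn with | _ t
      induction q₂ using Quotient.inductionOn with | _ s
      intro h
      exact Quotient.sound ((truthSet_eq_iff t s).mp (Subtype.ext_iff.mp h))
    · rintro ⟨U, hU⟩
      obtain ⟨t, ht⟩ := exists_term_iff_mem U hU
      refine ⟨Quotient.mk _ t, Subtype.ext ?_⟩
      ext x
      exact mem_truthSet.trans (ht x)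
  rw [Nat.card_congr (Equiv.ofBijective F hF), Nat.card_eq_fintype_card, Fintype.card_coe]

/-- All points, as a list. -/
def points : List Pt :=
  ([.z, .b, .c, .d, .u] : List K3) ×ˢ (([.z, .b, .c, .d, .u] : List K3) ×ˢ [0, 1, 2])

theorem points_toFinset : points.toFinset = Finset.univ := by
  decide +kernel

theorem countUpsets_codes : countUpsets bitLE 75 (points.map Pt.code) = 3059 := by
  decide +kernel

/-- The free algebra on two generators in the quasivariety generated by K₃
has exactly 3059 elements. -/
theorem statement13 : Nat.card (Quotient freeK32Setoid) = 3059 := by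
  rw [card_quotient_eq_card_upsets, ← points_toFinset,
    card_upsets_toFinset Pt.le Pt.le_refl Pt.le_trans 75 points (by decide)]
  exact (countUpsets_map Pt.code bitLE 75 points).symm.trans countUpsets_codes
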